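/- Let α, β > −1 and n ≥ 0 be an integer. Then for every real x, P_n^{(α,β)}(x) = d_{0,n} + 2 Σ_{k=1}^{n} d_{k,n} T_k(x), where T_k denotes the Chebyshev polynomial of the first kind and d_{k,n} are the Chebyshev-connection coefficients defined in terms of a terminating ₃F₂ sum. -/

import Mathlib

open Finset

/-- Pochhammer symbol `(a)_j = a (a+1) ⋯ (a+j-1)`. -/
noncomputable def poch (a : ℝ) (j : ℕ) : ℝ := ∏ i ∈ Finset.range j, (a + i)

/-- Generalized binomial coefficient `binom(a, m) = a (a-1) ⋯ (a-m+1) / m!`. -/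
noncomputable def gbinom (a : ℝ) (m : ℕ) : ℝ :=
  (∏ i ∈ Finset.range m, (a - i)) / (Nat.factorial m)

/-- Jacobi polynomial `P_n^{(α,β)}(x)` of a real variable. -/
noncomputable def jacobiP (α β : ℝ) (n : ℕ) (x : ℝ) : ℝ :=
  (1 / 2 ^ n) * ∑ k ∈ Finset.range (n + 1),
    gbinom ((n : ℝ) + α) (n - k) * gbinom ((n : ℝ) + β) k * (x - 1) ^ k * (x + 1) ^ (n - k)

/-- Jacobi polynomial `P_n^{(α,β)}(z)` of a complex variable. -/
noncomputable def jacobiC (α β : ℝ) (n : ℕ) (z : ℂ) : ℂ :=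
  (1 / 2 ^ n) * ∑ k ∈ Finset.range (n + 1),
    ((gbinom ((n : ℝ) + α) (n - k) * gbinom ((n : ℝ) + β) k : ℝ) : ℂ) *
      (z - 1) ^ k * (z + 1) ^ (n - k)

/-- Chebyshev-connection coefficients `d_{k,n}`, given by a terminating ₃F₂ sum. -/
noncomputable def dCoeff (α β : ℝ) (n k : ℕ) : ℝ :=
  (poch ((n : ℝ) + α + β + 1) k * poch ((k : ℝ) + α + 1) (n - k)) /
      ((Nat.factorial (n - k)) * 2 ^ (2 * k) * (Nat.factorial k)) *
    ∑ j ∈ Finset.range (n - k + 1),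
      (poch ((k : ℝ) - n) j * poch ((n : ℝ) + k + α + β + 1) j * poch ((k : ℝ) + 1 / 2) j) /
        (poch ((k : ℝ) + α + 1) j * poch (2 * (k : ℝ) + 1) j * (Nat.factorial j))

/-- The Bernstein ellipse `E_ρ`: the set of points `z = (u + u⁻¹)/2` with `|u| = ρ`. -/
def bernsteinEllipse (ρ : ℝ) : Set ℂ :=
  {z : ℂ | ∃ u : ℂ, ‖u‖ = ρ ∧ z = (u + u⁻¹) / 2}


/-!
Write `y = (x - 1) / 2`. Expanding `(y + 1) ^ (n - k)` and applying the Chu–Vandermonde identity,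
`P_n^{(α,β)}(x) = ∑ₘ binom(n+α, n-m) binom(n+m+α+β, m) yᵐ`. On the other hand the recurrence of the
Chebyshev polynomials says that the second difference of `s ↦ T_s` is `2 (X - 1) T_{s+1}`, so the
`2m`-th difference at `s = -m` is `(2 (X - 1))ᵐ = (4y)ᵐ`; since `T_{-k} = T_k`, this writes `yᵐ` as
a combination of `T_0, …, T_m` with weights `(-1)^(m+k) binom(2m, m+k) / 4^m`. Substituting the
second expansion into the first and collecting the coefficient of `T_k` gives the ₃F₂ sum of
`d_{k,n}`, term by term with `m = k + j`.
-/

open Polynomial (X)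
open Polynomial.Chebyshev (T)
open scoped Nat Polynomial

section FiniteSums

lemma sum_range_mul_pow_mul_add_one_pow {R : Type*} [CommSemiring R] (c : ℕ → R) (y : R) (n : ℕ) :
    ∑ k ∈ range (n + 1), c k * y ^ k * (y + 1) ^ (n - k) =
      ∑ m ∈ range (n + 1), (∑ k ∈ range (m + 1), (n - k).choose (m - k) * c k) * y ^ m := by
  calc ∑ k ∈ range (n + 1), c k * y ^ k * (y + 1) ^ (n - k)
      = ∑ k ∈ range (n + 1), ∑ j ∈ range (n + 1 - k), (n - k).choose j * c k * y ^ (k + j) := by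
        refine sum_congr rfl fun k hk => ?_
        rw [Nat.sub_add_comm (mem_range_succ_iff.1 hk), add_pow, mul_sum]
        refine sum_congr rfl fun j _ => ?_
        rw [one_pow, pow_add]
        ring
    _ = ∑ m ∈ range (n + 1), ∑ k ∈ range (m + 1),
          (n - k).choose (m - k) * c k * y ^ (k + (m - k)) :=
        (sum_range_diag_flip (n + 1) fun k j => (n - k).choose j * c k * y ^ (k + j)).symm
    _ = _ := by
        refine sum_congr rfl fun m _ => ?_
        rw [sum_mul]
        refine sum_congr rfl fun k hk => ?_
        rw [Nat.add_sub_cancel' (mem_range_succ_iff.1 hk)]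

lemma sum_range_two_mul_add_one_of_symm {M : Type*} [AddCommMonoid M] (f : ℕ → M) (m : ℕ)
    (hf : ∀ k ≤ m, f (m - k) = f (m + k)) :
    ∑ i ∈ range (2 * m + 1), f i = f m + 2 • ∑ k ∈ Icc 1 m, f (m + k) := by
  have left_half : ∑ i ∈ range m, f i = ∑ k ∈ range m, f (m + (k + 1)) := by
    rw [← sum_range_reflect]
    refine sum_congr rfl fun k hk => ?_
    rw [← hf (k + 1) (mem_range.1 hk), Nat.sub_sub, add_comm 1 k]
  have shift : ∑ k ∈ Icc 1 m, f (m + k) = ∑ k ∈ range m, f (m + (k + 1)) := by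
    rw [← Ico_add_one_right_eq_Icc, sum_Ico_eq_sum_range]
    simp only [Nat.add_sub_cancel, add_comm 1]
  rw [show 2 * m + 1 = m + (m + 1) by ring, sum_range_add, sum_range_succ', left_half, shift,
    add_zero]
  abel

end FiniteSums

section Pochhammer

lemma poch_zero (a : ℝ) : poch a 0 = 1 := prod_range_zero _

lemma poch_succ (a : ℝ) (j : ℕ) : poch a (j + 1) = poch a j * (a + j) := prod_range_succ _ _

lemma poch_add (a : ℝ) (m k : ℕ) : poch a (m + k) = poch a m * poch (a + m) k := by
  simp [poch, prod_range_add, add_assoc]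

lemma poch_eq_ascPochhammer_eval (a : ℝ) (j : ℕ) : poch a j = (ascPochhammer ℝ j).eval a := by
  induction j with
  | zero => simp [poch_zero]
  | succ j ih => rw [poch_succ, ascPochhammer_succ_eval, ih]

lemma poch_ne_zero {a : ℝ} {j : ℕ} (ha : ∀ i < j, a + i ≠ 0) : poch a j ≠ 0 :=
  prod_ne_zero_iff.2 fun i hi => ha i (mem_range.1 hi)

lemma poch_neg_natCast_mul_factorial {N j : ℕ} (hj : j ≤ N) :
    poch (-(N : ℝ)) j * (N - j)! = (-1) ^ j * N ! := by
  induction j with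
  | zero => simp [poch_zero]
  | succ j ih =>
    have hfac : (((N - j)! : ℕ) : ℝ) = (N - j) * (N - (j + 1))! := by
      rw [← Nat.mul_factorial_pred (by omega), Nat.cast_mul, Nat.cast_sub (by omega), Nat.sub_sub]
    rw [poch_succ, pow_succ]
    linear_combination (poch (-(N : ℝ)) j) * hfac - ih (by omega)

lemma poch_natCast_add_one_mul_factorial (N j : ℕ) :
    poch ((N : ℝ) + 1) j * N ! = (N + j)! := by
  induction j with
  | zero => simp [poch_zero]
  | succ j ih =>
    rw [poch_succ, ← add_assoc, Nat.factorial_succ]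
    push_cast
    linear_combination ((N : ℝ) + 1 + j) * ih

-- Legendre's duplication formula for the Gamma function, specialised to integers.
lemma poch_natCast_add_half_mul_factorial (k j : ℕ) :
    poch ((k : ℝ) + 1 / 2) j * 4 ^ j * (k + j)! * (2 * k)! = (2 * (k + j))! * k ! := by
  induction j with
  | zero => simp [poch_zero, mul_comm]
  | succ j ih =>
    rw [poch_succ, ← add_assoc, show 2 * (k + j + 1) = 2 * (k + j) + 1 + 1 by ring,
      Nat.factorial_succ, Nat.factorial_succ, Nat.factorial_succ]
    push_cast
    linear_combination (2 * ((k : ℝ) + j) + 1 + 1) * (2 * (k + j) + 1) * ih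

lemma poch_div_factorial_mul_poch_neg_div {b : ℝ} {N j : ℕ} (hj : j ≤ N) (hb : poch b j ≠ 0) :
    poch b N / N ! * (poch (-(N : ℝ)) j / poch b j) =
      (-1) ^ j * (poch (b + j) (N - j) / (N - j)!) := by
  have hsplit : poch b N = poch b j * poch (b + j) (N - j) := by
    rw [← poch_add, Nat.add_sub_cancel' hj]
  rw [hsplit, eq_div_of_mul_eq (by positivity) (poch_neg_natCast_mul_factorial hj)]
  field_simp

lemma poch_add_half_div_poch (k j : ℕ) :
    poch ((k : ℝ) + 1 / 2) j / (poch (2 * (k : ℝ) + 1) j * j ! * k !) =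
      (2 * (k + j)).choose (k + j + k) / (4 ^ j * (k + j)!) := by
  have hhalf := poch_natCast_add_half_mul_factorial k j
  have hnat : poch (2 * (k : ℝ) + 1) j * (2 * k)! = (2 * k + j)! := by
    exact_mod_cast poch_natCast_add_one_mul_factorial (2 * k) j
  have hchoose : ((2 * (k + j)).choose (k + j + k) : ℝ) * (2 * k + j)! * j ! = (2 * (k + j))! := by
    rw [show 2 * (k + j) = j + (2 * k + j) by ring, show k + j + k = 2 * k + j by ring,
      mul_right_comm]
    exact_mod_cast Nat.add_choose_mul_factorial_mul_factorial j (2 * k + j)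
  have hpoch : poch (2 * (k : ℝ) + 1) j ≠ 0 := poch_ne_zero fun i _ => by positivity
  rw [div_eq_div_iff (by positivity) (by positivity)]
  refine mul_right_cancel₀ (b := ((2 * k)! : ℝ)) (by positivity) ?_
  linear_combination hhalf - (k ! : ℝ) * hchoose -
    ((2 * (k + j)).choose (k + j + k) : ℝ) * j ! * k ! * hnat

end Pochhammer

section GeneralizedBinomial

lemma gbinom_eq_ring_choose (a : ℝ) (m : ℕ) : gbinom a m = Ring.choose a m := by
  rw [gbinom, ← descPochhammer_eval_eq_prod_range, Ring.choose_eq_smul,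
    descPochhammer_eval_eq_ascPochhammer, Polynomial.descPochhammer_smeval_eq_ascPochhammer,
    Polynomial.ascPochhammer_smeval_eq_eval, smul_eq_mul, div_eq_inv_mul]

lemma gbinom_add_natCast (a : ℝ) (m : ℕ) : gbinom (a + m) m = poch (a + 1) m / m ! := by
  rw [gbinom, ← descPochhammer_eval_eq_prod_range, descPochhammer_eval_eq_ascPochhammer,
    add_sub_cancel_right, poch_eq_ascPochhammer_eval]

-- Trinomial revision turns the left-hand side into a Chu–Vandermonde convolution.
lemma sum_choose_mul_ring_choose_mul_ring_choose {R : Type*} [CommRing R] [BinomialRing R]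
    (r s : R) {m n : ℕ} (hmn : m ≤ n) :
    ∑ k ∈ range (m + 1), (n - k).choose (m - k) * (Ring.choose r (n - k) * Ring.choose s k) =
      Ring.choose r (n - m) * Ring.choose (s + (r - (n - m : ℕ))) m := by
  rw [Ring.add_choose_eq m (Commute.all _ _), Nat.sum_antidiagonal_eq_sum_range_succ
    (fun i j => Ring.choose s i * Ring.choose (r - (n - m : ℕ)) j), mul_sum]
  refine sum_congr rfl fun k hk => ?_
  have hkm : k ≤ m := mem_range_succ_iff.1 hk
  have hrev := Ring.choose_smul_choose r (n := n - k) (k := n - m) (by omega)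
  rw [show n - k - (n - m) = m - k by omega, nsmul_eq_mul,
    Nat.choose_symm_of_eq_add (show n - k = (n - m) + (m - k) by omega)] at hrev
  linear_combination Ring.choose s k * hrev

end GeneralizedBinomial

section JacobiAroundOne

/-- The coefficient of `((x - 1) / 2) ^ m` in the expansion of `P_n^{(α,β)}(x)` around `x = 1`.
Only `m ≤ n` is meaningful: beyond that `n - m` is truncated to `0`. -/
noncomputable def jacobiTaylorCoeff (α β : ℝ) (n m : ℕ) : ℝ :=
  gbinom (n + α) (n - m) * gbinom (n + α + β + m) m

lemma sum_choose_mul_gbinom_mul_gbinom (α β : ℝ) {m n : ℕ} (hmn : m ≤ n) :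
    ∑ k ∈ range (m + 1), (n - k).choose (m - k) * (gbinom (n + α) (n - k) * gbinom (n + β) k) =
      jacobiTaylorCoeff α β n m := by
  have hshift : (n : ℝ) + α + β + m = n + β + (n + α - (n - m : ℕ)) := by
    rw [Nat.cast_sub hmn]
    ring
  simp only [jacobiTaylorCoeff, gbinom_eq_ring_choose, hshift]
  exact sum_choose_mul_ring_choose_mul_ring_choose _ _ hmn

lemma jacobiP_eq_sum_mul_pow_mul_add_one_pow (α β : ℝ) (n : ℕ) (x : ℝ) :
    jacobiP α β n x = ∑ k ∈ range (n + 1), gbinom (n + α) (n - k) * gbinom (n + β) k *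
      ((x - 1) / 2) ^ k * ((x - 1) / 2 + 1) ^ (n - k) := by
  rw [jacobiP, mul_sum]
  refine sum_congr rfl fun k hk => ?_
  have hpow : (2 : ℝ) ^ n = 2 ^ k * 2 ^ (n - k) := by
    rw [← pow_add, Nat.add_sub_cancel' (mem_range_succ_iff.1 hk)]
  rw [show (x - 1) / 2 + 1 = (x + 1) / 2 by ring, div_pow, div_pow, hpow]
  field_simp

theorem jacobiP_eq_sum_jacobiTaylorCoeff_mul_pow (α β : ℝ) (n : ℕ) (x : ℝ) :
    jacobiP α β n x =
      ∑ m ∈ range (n + 1), jacobiTaylorCoeff α β n m * ((x - 1) / 2) ^ m := by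
  rw [jacobiP_eq_sum_mul_pow_mul_add_one_pow, sum_range_mul_pow_mul_add_one_pow]
  refine sum_congr rfl fun m hm => ?_
  rw [sum_choose_mul_gbinom_mul_gbinom α β (mem_range_succ_iff.1 hm)]

lemma jacobiTaylorCoeff_eq_poch (α β : ℝ) {m n : ℕ} (hmn : m ≤ n) :
    jacobiTaylorCoeff α β n m =
      poch (m + α + 1) (n - m) / (n - m)! * (poch (n + α + β + 1) m / m !) := by
  have hshift : (n : ℝ) + α = m + α + (n - m : ℕ) := by
    rw [Nat.cast_sub hmn]
    ring
  rw [jacobiTaylorCoeff, gbinom_add_natCast, hshift, gbinom_add_natCast]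

end JacobiAroundOne

section ChebyshevExpansionOfPowers

variable (R : Type*) [CommRing R]

lemma fwdDiff_iter_chebyshev_T (m : ℕ) (s : ℤ) :
    (fwdDiff 1)^[2 * m] (T R) s = (2 * (X - 1)) ^ m * T R (s + m) := by
  induction m generalizing s with
  | zero => simp
  | succ m ih =>
    rw [show 2 * (m + 1) = 2 * m + 1 + 1 by ring, Function.iterate_succ_apply',
      Function.iterate_succ_apply']
    simp only [fwdDiff, ih]
    rw [show s + 1 + 1 + (m : ℤ) = s + m + 2 by ring, Polynomial.Chebyshev.T_add_two,
      show s + 1 + (m : ℤ) = s + m + 1 by ring, show s + (m + 1 : ℕ) = s + m + 1 by push_cast; ring]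
    ring

lemma two_mul_X_sub_one_pow_eq_sum_range_chebyshev_T (m : ℕ) :
    (2 * (X - 1)) ^ m =
      ∑ i ∈ range (2 * m + 1), (-1) ^ i * ((2 * m).choose i : R[X]) * T R (i - m) := by
  have hdiff := fwdDiff_iter_chebyshev_T R m (-m)
  rw [neg_add_cancel, Polynomial.Chebyshev.T_zero, mul_one, fwdDiff_iter_eq_sum_shift] at hdiff
  rw [← hdiff]
  refine sum_congr rfl fun i hi => ?_
  have hsign : (-1 : ℤ) ^ (2 * m - i) = (-1) ^ i := neg_one_pow_congr (by grind)
  rw [hsign, show -(m : ℤ) + i • 1 = i - m by simp [neg_add_eq_sub], zsmul_eq_mul]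
  push_cast
  rfl

theorem two_mul_X_sub_one_pow_eq_sum_Icc_chebyshev_T (m : ℕ) :
    (2 * (X - 1)) ^ m = (-1) ^ m * ((2 * m).choose m : R[X]) +
      2 * ∑ k ∈ Icc 1 m, (-1) ^ (m + k) * ((2 * m).choose (m + k) : R[X]) * T R k := by
  rw [two_mul_X_sub_one_pow_eq_sum_range_chebyshev_T, sum_range_two_mul_add_one_of_symm]
  · simp
  · intro k hk
    have hchoose : (2 * m).choose (m - k) = (2 * m).choose (m + k) :=
      Nat.choose_symm_of_eq_add (by omega)
    have hsign : (-1 : R[X]) ^ (m - k) = (-1) ^ (m + k) := neg_one_pow_congr (by grind)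
    rw [hchoose, hsign, ← Polynomial.Chebyshev.T_neg]
    congr 2
    push_cast [hk]
    ring

/-- The coefficient of `T_k` in the symmetric expansion `c_0 + 2 ∑_{k ≥ 1} c_k T_k` of
`((x - 1) / 2) ^ m`; it vanishes for `k > m`. -/
noncomputable def chebyshevPowCoeff (m k : ℕ) : ℝ :=
  (-1) ^ (m + k) * (2 * m).choose (m + k) / 4 ^ m

lemma chebyshevPowCoeff_eq_zero_of_lt {m k : ℕ} (h : m < k) : chebyshevPowCoeff m k = 0 := by
  rw [chebyshevPowCoeff, Nat.choose_eq_zero_of_lt (by omega)]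
  simp

lemma sub_one_div_two_pow_eq_sum_chebyshevPowCoeff_mul_T (x : ℝ) {m n : ℕ} (hmn : m ≤ n) :
    ((x - 1) / 2) ^ m = chebyshevPowCoeff m 0 +
      2 * ∑ k ∈ Icc 1 n, chebyshevPowCoeff m k * (T ℝ k).eval x := by
  have hsupport : ∑ k ∈ Icc 1 n, chebyshevPowCoeff m k * (T ℝ k).eval x =
      ∑ k ∈ Icc 1 m, chebyshevPowCoeff m k * (T ℝ k).eval x := by
    refine (sum_subset (Icc_subset_Icc_right hmn) fun k hk hkm => ?_).symm
    rw [chebyshevPowCoeff_eq_zero_of_lt (by simp only [mem_Icc] at hk hkm; omega), zero_mul]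
  have hpow := congrArg (Polynomial.eval x) (two_mul_X_sub_one_pow_eq_sum_Icc_chebyshev_T ℝ m)
  simp only [Polynomial.eval_pow, Polynomial.eval_add, Polynomial.eval_sub, Polynomial.eval_mul,
    Polynomial.eval_neg, Polynomial.eval_one, Polynomial.eval_ofNat, Polynomial.eval_X,
    Polynomial.eval_natCast, Polynomial.eval_finsetSum] at hpow
  rw [hsupport, show (x - 1) / 2 = 2 * (x - 1) / 4 by ring, div_pow, hpow, add_div,
    mul_div_assoc 2, sum_div]
  simp only [chebyshevPowCoeff, add_zero, div_mul_eq_mul_div]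

end ChebyshevExpansionOfPowers

section ConnectionCoefficients

lemma jacobiTaylorCoeff_mul_chebyshevPowCoeff {α : ℝ} (β : ℝ) {n k j : ℕ} (hkj : k + j ≤ n)
    (hα : poch (k + α + 1) j ≠ 0) :
    jacobiTaylorCoeff α β n (k + j) * chebyshevPowCoeff (k + j) k =
      poch (n + α + β + 1) k * poch (k + α + 1) (n - k) / ((n - k)! * 2 ^ (2 * k) * k !) *
        (poch (k - n) j * poch (n + k + α + β + 1) j * poch (k + 1 / 2) j /
          (poch (k + α + 1) j * poch (2 * k + 1) j * j !)) := by
  have hratio := poch_div_factorial_mul_poch_neg_div (N := n - k) (by omega) hα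
  have hsplit := poch_add (n + α + β + 1) k j
  have hhalf := poch_add_half_div_poch k j
  have hsign : (-1 : ℝ) ^ (k + j + k) = (-1) ^ j := neg_one_pow_congr (by grind)
  rw [Nat.cast_sub (by omega), neg_sub, Nat.sub_sub,
    show (k : ℝ) + α + 1 + j = (k + j : ℕ) + α + 1 by push_cast; ring] at hratio
  rw [show (n : ℝ) + α + β + 1 + k = n + k + α + β + 1 by ring] at hsplit
  calc jacobiTaylorCoeff α β n (k + j) * chebyshevPowCoeff (k + j) k
      = (-1) ^ j * (poch ((k + j : ℕ) + α + 1) (n - (k + j)) / (n - (k + j))!) *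
          poch (n + α + β + 1) (k + j) *
          ((2 * (k + j)).choose (k + j + k) / (4 ^ j * (k + j)!)) / 4 ^ k := by
        rw [jacobiTaylorCoeff_eq_poch α β hkj, chebyshevPowCoeff, hsign, pow_add]
        ring
    _ = _ := by
        rw [← hratio, hsplit, ← hhalf, pow_mul, show (2 : ℝ) ^ 2 = 4 by norm_num]
        ring

lemma dCoeff_eq_sum_jacobiTaylorCoeff_mul_chebyshevPowCoeff {α : ℝ} (β : ℝ) {n k : ℕ}
    (hα : ∀ i ∈ Icc 1 n, α + i ≠ 0) (hk : k ≤ n) :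
    dCoeff α β n k =
      ∑ m ∈ range (n + 1), jacobiTaylorCoeff α β n m * chebyshevPowCoeff m k := by
  have hsupport : ∑ m ∈ range k, jacobiTaylorCoeff α β n m * chebyshevPowCoeff m k = 0 :=
    sum_eq_zero fun m hm => by
      rw [chebyshevPowCoeff_eq_zero_of_lt (mem_range.1 hm), mul_zero]
  rw [show n + 1 = k + (n - k + 1) by omega, sum_range_add, hsupport, zero_add, dCoeff, mul_sum]
  refine sum_congr rfl fun j hj => ?_
  have hkj : k + j ≤ n := by have := mem_range.1 hj; omega
  refine (jacobiTaylorCoeff_mul_chebyshevPowCoeff β hkj <| poch_ne_zero fun i hi => ?_).symm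
  have hne := hα (k + i + 1) (mem_Icc.2 ⟨by omega, by omega⟩)
  push_cast at hne
  convert hne using 1
  ring

end ConnectionCoefficients

theorem jacobi_chebyshev_expansion_general
    (α β : ℝ) (n : ℕ) (hα : ∀ i ∈ Icc 1 n, α + i ≠ 0) (x : ℝ) :
    jacobiP α β n x =
      dCoeff α β n 0 + 2 * ∑ k ∈ Icc 1 n, dCoeff α β n k * (T ℝ k).eval x := by
  calc jacobiP α β n x
      = ∑ m ∈ range (n + 1), jacobiTaylorCoeff α β n m * ((x - 1) / 2) ^ m :=
        jacobiP_eq_sum_jacobiTaylorCoeff_mul_pow α β n x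
    _ = ∑ m ∈ range (n + 1), jacobiTaylorCoeff α β n m * (chebyshevPowCoeff m 0 +
          2 * ∑ k ∈ Icc 1 n, chebyshevPowCoeff m k * (T ℝ k).eval x) :=
        sum_congr rfl fun m hm => by
          rw [sub_one_div_two_pow_eq_sum_chebyshevPowCoeff_mul_T x (mem_range_succ_iff.1 hm)]
    _ = ∑ m ∈ range (n + 1), jacobiTaylorCoeff α β n m * chebyshevPowCoeff m 0 +
          2 * ∑ k ∈ Icc 1 n, (∑ m ∈ range (n + 1),
            jacobiTaylorCoeff α β n m * chebyshevPowCoeff m k) * (T ℝ k).eval x := by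
        simp only [mul_add, sum_add_distrib, mul_left_comm _ (2 : ℝ), mul_sum, sum_mul, mul_assoc]
        rw [sum_comm]
    _ = dCoeff α β n 0 + 2 * ∑ k ∈ Icc 1 n, dCoeff α β n k * (T ℝ k).eval x := by
        rw [dCoeff_eq_sum_jacobiTaylorCoeff_mul_chebyshevPowCoeff β hα n.zero_le]
        congr 2
        exact sum_congr rfl fun k hk => by
          rw [dCoeff_eq_sum_jacobiTaylorCoeff_mul_chebyshevPowCoeff β hα (mem_Icc.1 hk).2]

/-- For `α, β > -1`, the Jacobi polynomial expands in Chebyshev polynomials of the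
first kind as `P_n^{(α,β)}(x) = d_{0,n} + 2 ∑_{k=1}^{n} d_{k,n} T_k(x)`. -/
theorem jacobi_chebyshev_expansion
    (α β : ℝ) (hα : -1 < α) (hβ : -1 < β) (n : ℕ) (x : ℝ) :
    jacobiP α β n x =
      dCoeff α β n 0 + 2 * ∑ k ∈ Finset.Icc 1 n,
        dCoeff α β n k * (Polynomial.Chebyshev.T ℝ (k : ℤ)).eval x := by
  refine jacobi_chebyshev_expansion_general α β n (fun i hi => ?_) x
  linarith [(Nat.one_le_cast (α := ℝ)).2 (mem_Icc.1 hi).1]
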